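/- arXiv:1701.02208 — 6 statements merged into one kernel-verified Lean document; each statement's English description precedes it below -/
import Mathlib

section
/- Let (K_i, φ_i)_{i=0,…,m} be a tower with K₀ = ∅ in which every map φ_i is an elementary inclusion or an elementary contraction, and let (K̂_i) be its coning filtration. Then for every i ∈ {0,…,m}, the set of vertices of K_i is equal to the set of vertices of K̂_i that are marked active after step i. -/
noncomputable section
open scoped Classical

/-- An abstract simplicial complex: a finite collection of nonempty finite sets
closed under taking nonempty subsets. -/
def IsComplex {V : Type*} [DecidableEq V] (K : Finset (Finset V)) : Prop :=
  ∀ σ ∈ K, σ.Nonempty ∧ ∀ τ ⊆ σ, τ.Nonempty → τ ∈ K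

/-- The closed star of a vertex `w` in `K`: all `τ ∈ K` with `τ ∪ {w} ∈ K`. -/
def closedStar {V : Type*} [DecidableEq V] (w : V) (K : Finset (Finset V)) :
    Finset (Finset V) :=
  K.filter (fun τ => insert w τ ∈ K)

/-- The active closed star: simplices of the closed star all of whose vertices lie
in the set `A` of active vertices. -/
def actCst {V : Type*} [DecidableEq V] (w : V) (K : Finset (Finset V)) (A : Finset V) :
    Finset (Finset V) :=
  (closedStar w K).filter (fun τ => τ ⊆ A)

/-- The vertex map of an elementary contraction sending `a` to `b` and fixing
every other vertex. -/
def contract {V : Type*} [DecidableEq V] (a b : V) : V → V :=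
  fun x => if x = a then b else x

/-- A tower of simplicial complexes `K 0 = ∅, K 1, …, K m` whose maps are elementary
inclusions or elementary contractions, bundled with its coning filtration `hatK` and
the set `act` of active vertices.  `step i = Sum.inl σ` records that `φ i` is the
elementary inclusion of `σ`, and `step i = Sum.inr (u, v)` records that `φ i` is the
elementary contraction of the vertices `u` and `v` (mapping both to the one that
stays active, chosen by comparing the sizes of the active closed stars). -/
structure ConedTower (V : Type*) [DecidableEq V] where
  m : ℕ
  K : ℕ → Finset (Finset V)
  hatK : ℕ → Finset (Finset V)
  act : ℕ → Finset V
  step : ℕ → (Finset V) ⊕ (V × V)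
  K_zero : K 0 = ∅
  hatK_zero : hatK 0 = ∅
  act_zero : act 0 = ∅
  complex : ∀ i ≤ m, IsComplex (K i)
  step_incl : ∀ i < m, ∀ σ, step i = Sum.inl σ →
    σ.Nonempty ∧ σ ∉ K i ∧ K (i+1) = insert σ (K i) ∧
    hatK (i+1) = insert σ (hatK i) ∧
    act (i+1) = (if σ.card = 1 then act i ∪ σ else act i)
  step_contr : ∀ i < m, ∀ u v, step i = Sum.inr (u, v) →
    u ≠ v ∧ ({u} : Finset V) ∈ K i ∧ ({v} : Finset V) ∈ K i ∧
    (if (actCst u (hatK i) (act i)).card ≤ (actCst v (hatK i) (act i)).card then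
      K (i+1) = (K i).image (fun σ => σ.image (contract u v)) ∧
      hatK (i+1) = hatK i ∪ (actCst u (hatK i) (act i)).image (fun τ => insert v τ) ∧
      act (i+1) = (act i).erase u
    else
      K (i+1) = (K i).image (fun σ => σ.image (contract v u)) ∧
      hatK (i+1) = hatK i ∪ (actCst v (hatK i) (act i)).image (fun τ => insert u τ) ∧
      act (i+1) = (act i).erase v)

/-- One contraction step, sending `a` to `b`, preserves the invariant. -/
theorem contraction_step_aux {V : Type*} [DecidableEq V] (K hatK S : Finset (Finset V))
    (A : Finset V) (a b : V) (hab : a ≠ b) (hK : IsComplex K)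
    (hb : ({b} : Finset V) ∈ K)
    (ih : ∀ x : V, ({x} : Finset V) ∈ K ↔ (({x} : Finset V) ∈ hatK ∧ x ∈ A)) (x : V) :
    ({x} : Finset V) ∈ K.image (fun σ => σ.image (contract a b)) ↔
      (({x} : Finset V) ∈ hatK ∪ S.image (fun τ => insert b τ) ∧ x ∈ A.erase a) := by
  have h1 : ({x} : Finset V) ∈ K.image (fun σ => σ.image (contract a b)) ↔
      (x ≠ a ∧ ({x} : Finset V) ∈ K) := by
    constructor
    · intro h
      obtain ⟨σ, hσ, hx⟩ := Finset.mem_image.1 h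
      have hxm : x ∈ σ.image (contract a b) := by
        have h2 : x ∈ ({x} : Finset V) := Finset.mem_singleton_self x
        rw [← hx] at h2
        exact h2
      obtain ⟨y, hy, hyx⟩ := Finset.mem_image.1 hxm
      have hyK : ({y} : Finset V) ∈ K :=
        (hK σ hσ).2 {y} (Finset.singleton_subset_iff.2 hy) (Finset.singleton_nonempty y)
      unfold contract at hyx
      split_ifs at hyx with hya
      · subst hyx
        exact ⟨hab.symm, hb⟩
      · subst hyx
        exact ⟨hya, hyK⟩
    · rintro ⟨hxa, hx⟩
      refine Finset.mem_image.2 ⟨{x}, hx, ?_⟩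
      simp [contract, hxa]
  have h2 : ({x} : Finset V) ∈ hatK ∪ S.image (fun τ => insert b τ) ↔
      ({x} : Finset V) ∈ hatK := by
    constructor
    · intro h
      rcases Finset.mem_union.1 h with h | h
      · exact h
      · obtain ⟨τ, _, hx⟩ := Finset.mem_image.1 h
        have hbx : b ∈ ({x} : Finset V) := by
          rw [← hx]
          exact Finset.mem_insert_self b τ
        rw [Finset.mem_singleton] at hbx
        subst hbx
        exact ((ih b).1 hb).1
    · exact fun h => Finset.mem_union_left _ h
  rw [h1, h2, ih x, Finset.mem_erase]
  tauto

/-- For every `i ∈ {0,…,m}`, the set of vertices of `K i` equals the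
set of vertices of `K̂ i` that are marked active after step `i`. -/
theorem vertices_eq_active {V : Type*} [DecidableEq V] (T : ConedTower V)
    (i : ℕ) (hi : i ≤ T.m) (v : V) :
    ({v} : Finset V) ∈ T.K i ↔ (({v} : Finset V) ∈ T.hatK i ∧ v ∈ T.act i) := by
  induction i generalizing v with
  | zero => simp [T.K_zero, T.hatK_zero]
  | succ i ih =>
    have ih' := fun x => ih (by omega) x
    have hlt : i < T.m := by omega
    rcases hs : T.step i with σ | ⟨a, b⟩
    · obtain ⟨-, -, hK, hH, hA⟩ := T.step_incl i hlt σ hs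
      rw [hK, hH, hA]
      have := ih' v
      by_cases hv : σ = {v}
      · subst hv
        simp
      · have hv2 : ({v} : Finset V) ≠ σ := fun h => hv h.symm
        simp only [Finset.mem_insert, hv2, false_or]
        split_ifs with hc
        · obtain ⟨w, rfl⟩ := Finset.card_eq_one.1 hc
          have hvw : v ≠ w := by
            rintro rfl
            exact hv rfl
          simp [hvw, this]
        · exact this
    · obtain ⟨hne, ha, hb, h⟩ := T.step_contr i hlt a b hs
      have hc := T.complex i (by omega)
      split_ifs at h
      · obtain ⟨hK, hH, hA⟩ := h
        rw [hK, hH, hA]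
        exact contraction_step_aux _ _ _ _ a b hne hc hb ih' v
      · obtain ⟨hK, hH, hA⟩ := h
        rw [hK, hH, hA]
        exact contraction_step_aux _ _ _ _ b a hne.symm hc ha ih' v
end
end

section
/- Let (K_i, φ_i)_{i=0,…,m} be a tower with K₀ = ∅ in which every map φ_i is an elementary inclusion or an elementary contraction, and let (K̂_i) be its coning filtration. Then for every i such that φ_i is an elementary contraction and every simplex σ ∈ K_i, the union σ ∪ φ_i(σ) is a simplex of K̂_{i+1}. (In other words, the composite maps K_i → K_{i+1} ↪ K̂_{i+1} and K_i ↪ K̂_i ↪ K̂_{i+1} are contiguous.) -/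
noncomputable section
open scoped Classical

theorem image_contract_of_notMem {V : Type*} [DecidableEq V] (a b : V) (σ : Finset V)
    (h : a ∉ σ) : σ.image (contract a b) = σ := by
  ext x
  simp only [Finset.mem_image, contract]
  grind

theorem image_contract_of_mem {V : Type*} [DecidableEq V] (a b : V) (σ : Finset V)
    (h : a ∈ σ) : σ.image (contract a b) = insert b (σ.erase a) := by
  ext x
  simp only [Finset.mem_image, contract, Finset.mem_insert, Finset.mem_erase]
  grind

theorem contr_step_aux {V : Type*} [DecidableEq V] (K H : Finset (Finset V)) (A : Finset V)
    (hK : IsComplex K) (hKH : ∀ σ ∈ K, σ ∈ H ∧ σ ⊆ A) (a b : V) (hab : a ≠ b)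
    (hb : ({b} : Finset V) ∈ K) (σ : Finset V) (hσ : σ ∈ K) :
    (σ.image (contract a b) ∈ H ∪ (actCst a H A).image (fun τ => insert b τ) ∧
      σ.image (contract a b) ⊆ A.erase a) ∧
    σ ∪ σ.image (contract a b) ∈ H ∪ (actCst a H A).image (fun τ => insert b τ) := by
  have hbA : b ∈ A := (hKH _ hb).2 (by simp)
  have hσA := (hKH _ hσ).2
  have hσH := (hKH _ hσ).1
  by_cases ha : a ∈ σ
  · rw [image_contract_of_mem a b σ ha]
    refine ⟨⟨?_, ?_⟩, ?_⟩
    · rcases Finset.eq_empty_or_nonempty (σ.erase a) with he | hne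
      · rw [he]
        exact Finset.mem_union_left _ (by simpa using (hKH _ hb).1)
      · have ht := (hK σ hσ).2 _ (Finset.erase_subset a σ) hne
        refine Finset.mem_union_right _ (Finset.mem_image.2 ⟨σ.erase a, ?_, rfl⟩)
        simp only [actCst, closedStar, Finset.mem_filter]
        exact ⟨⟨(hKH _ ht).1, by rwa [Finset.insert_erase ha]⟩, (hKH _ ht).2⟩
    · intro x hx
      simp only [Finset.mem_insert, Finset.mem_erase] at hx ⊢
      rcases hx with rfl | hx
      · exact ⟨hab.symm, hbA⟩
      · exact ⟨hx.1, hσA hx.2⟩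
    · refine Finset.mem_union_right _ (Finset.mem_image.2 ⟨σ, ?_, ?_⟩)
      · simp only [actCst, closedStar, Finset.mem_filter]
        exact ⟨⟨hσH, by rwa [Finset.insert_eq_of_mem ha]⟩, hσA⟩
      · ext x
        simp only [Finset.mem_insert, Finset.mem_union, Finset.mem_erase]
        tauto
  · rw [image_contract_of_notMem a b σ ha, Finset.union_self]
    refine ⟨⟨Finset.mem_union_left _ hσH, ?_⟩, Finset.mem_union_left _ hσH⟩
    intro x hx
    exact Finset.mem_erase.2 ⟨fun h => ha (h ▸ hx), hσA hx⟩

theorem tower_invariant {V : Type*} [DecidableEq V] (T : ConedTower V) (i : ℕ) (hi : i ≤ T.m) :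
    ∀ σ ∈ T.K i, σ ∈ T.hatK i ∧ σ ⊆ T.act i := by
  induction i with
  | zero => simp [T.K_zero]
  | succ i ih =>
    have hlt : i < T.m := hi
    have ih := ih hlt.le
    rcases hs : T.step i with σ | ⟨u, v⟩
    · obtain ⟨hne, hnot, hK, hH, hA⟩ := T.step_incl i hlt σ hs
      have hsub : T.act i ⊆ T.act (i+1) := by
        rw [hA]
        split_ifs
        · exact Finset.subset_union_left
        · exact subset_rfl
      intro τ hτ
      have hτ' := hτ
      rw [hK, Finset.mem_insert] at hτ'
      rcases hτ' with rfl | hτ'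
      · refine ⟨by rw [hH]; exact Finset.mem_insert_self _ _, ?_⟩
        by_cases hc : τ.card = 1
        · rw [hA, if_pos hc]
          exact Finset.subset_union_right
        · intro x hx
          have h1 := (T.complex (i+1) hi τ hτ).2 {x} (by simpa using hx) (by simp)
          rw [hK, Finset.mem_insert] at h1
          rcases h1 with h1 | h1
          · exact absurd (by rw [← h1]; simp) hc
          · exact hsub ((ih _ h1).2 (by simp))
      · exact ⟨by rw [hH]; exact Finset.mem_insert_of_mem (ih _ hτ').1,
          (ih _ hτ').2.trans hsub⟩
    · obtain ⟨huv, hu, hv, hc⟩ := T.step_contr i hlt u v hs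
      have hcx := T.complex i hlt.le
      split_ifs at hc
      · obtain ⟨hK, hH, hA⟩ := hc
        intro τ hτ
        rw [hK, Finset.mem_image] at hτ
        obtain ⟨σ, hσ, rfl⟩ := hτ
        rw [hH, hA]
        exact (contr_step_aux _ _ _ hcx ih u v huv hv σ hσ).1
      · obtain ⟨hK, hH, hA⟩ := hc
        intro τ hτ
        rw [hK, Finset.mem_image] at hτ
        obtain ⟨σ, hσ, rfl⟩ := hτ
        rw [hH, hA]
        exact (contr_step_aux _ _ _ hcx ih v u huv.symm hu σ hσ).1

/-- If `φ i` is the elementary contraction of `u` and `v`, then for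
every simplex `σ ∈ K i`, the union `σ ∪ φ i (σ)` is a simplex of `K̂ (i+1)`.
(Here `φ i` maps both contracted vertices to the one that stays active, so
`φ i (σ)` is the image of `σ` under the corresponding `contract` map.)  In other
words, the composites `K_i → K_{i+1} ↪ K̂_{i+1}` and `K_i ↪ K̂_i ↪ K̂_{i+1}` are
contiguous. -/
theorem contiguous_of_contraction {V : Type*} [DecidableEq V] (T : ConedTower V)
    (i : ℕ) (hi : i < T.m) (u v : V) (h : T.step i = Sum.inr (u, v))
    (σ : Finset V) (hσ : σ ∈ T.K i) :
    (if (actCst u (T.hatK i) (T.act i)).card ≤ (actCst v (T.hatK i) (T.act i)).card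
      then σ ∪ σ.image (contract u v)
      else σ ∪ σ.image (contract v u)) ∈ T.hatK (i+1) := by
  obtain ⟨huv, hu, hv, hc⟩ := T.step_contr i hi u v h
  have hcx := T.complex i hi.le
  have inv := tower_invariant T i hi.le
  split_ifs at hc ⊢
  · rw [hc.2.1]
    exact (contr_step_aux _ _ _ hcx inv u v huv hv σ hσ).2
  · rw [hc.2.1]
    exact (contr_step_aux _ _ _ hcx inv v u huv.symm hu σ hσ).2
end
end

section
/- Let W be a full binary forest. Then every node x of W is deleted by the pruning procedure exactly in the r(x)-th iteration; that is, x belongs to W_(r(x)−1) but not to W_(r(x)). -/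
noncomputable section
open scoped Classical

/-- A finite full binary forest.  Nodes are natural numbers, every node's parent has a
strictly larger index, and every node has exactly `0` or `2` children. -/
structure PForest where
  nodes : Finset ℕ
  parent : ℕ → Option ℕ
  parent_lt : ∀ x y, parent x = some y → x < y
  parent_mem : ∀ x ∈ nodes, ∀ y, parent x = some y → y ∈ nodes
  parent_none_of_not_mem : ∀ x, x ∉ nodes → parent x = none
  full : ∀ x ∈ nodes, (nodes.filter (fun y => parent y = some x)).card = 0 ∨
    (nodes.filter (fun y => parent y = some x)).card = 2

/-- The children of a node. -/
def PForest.children (F : PForest) (x : ℕ) : Finset ℕ :=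
  F.nodes.filter (fun y => F.parent y = some x)

theorem PForest.child_lt (F : PForest) {y x : ℕ} (h : y ∈ F.children x) : y < x :=
  F.parent_lt _ _ (Finset.mem_filter.mp h).2

/-- The function `r`: `r(x) = 1` for leaves; for an internal node with children
`y₁, y₂`, `r(x) = r(y₁) + 1` if `r(y₁) = r(y₂)` and `r(x) = max (r(y₁)) (r(y₂))`
otherwise. -/
def PForest.rank (F : PForest) (x : ℕ) : ℕ :=
  if h : (F.children x).Nonempty then
    if F.rank ((F.children x).min' h) = F.rank ((F.children x).max' h)
    then F.rank ((F.children x).min' h) + 1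
    else max (F.rank ((F.children x).min' h)) (F.rank ((F.children x).max' h))
  else 1
termination_by x
decreasing_by
  all_goals first
    | exact F.child_lt (Finset.min'_mem _ h)
    | exact F.child_lt (Finset.max'_mem _ h)

/-- `x` is a leaf of the induced forest on the node set `S`. -/
def PForest.leafIn (F : PForest) (S : Finset ℕ) (x : ℕ) : Prop :=
  x ∈ S ∧ ∀ y ∈ S, F.parent y ≠ some x

/-- `x` has a sibling in the induced forest on the node set `S`. -/
def PForest.hasSiblingIn (F : PForest) (S : Finset ℕ) (x : ℕ) : Prop :=
  ∃ y ∈ S, y ≠ x ∧ F.parent y = F.parent x ∧ F.parent x ≠ none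

/-- An ascending path of the forest: a nonempty list of nodes in which each entry is
followed by its parent. -/
def PForest.IsAscPath (F : PForest) (l : List ℕ) : Prop :=
  l ≠ [] ∧ (∀ x ∈ l, x ∈ F.nodes) ∧ l.Chain' (fun a b => F.parent a = some b)

/-- An only-child-path of the induced forest on the node set `S`: an ascending path
starting at a leaf of `S`, all of whose nodes except the last have no sibling in `S`,
and ending at the first node that has a sibling in `S`, or at a root. -/
def PForest.OnlyChildPath (F : PForest) (S : Finset ℕ) (l : List ℕ) : Prop :=
  l ≠ [] ∧ (∀ x ∈ l, x ∈ S) ∧ l.Chain' (fun a b => F.parent a = some b) ∧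
  (∀ x, l.head? = some x → F.leafIn S x) ∧
  (∀ x ∈ l.dropLast, ¬ F.hasSiblingIn S x) ∧
  (∀ x, l.getLast? = some x → (F.hasSiblingIn S x ∨ F.parent x = none))

/-- One iteration of the pruning procedure: delete all nodes lying on some
only-child-path of `S`. -/
def PForest.prune (F : PForest) (S : Finset ℕ) : Finset ℕ :=
  S.filter (fun x => ¬ ∃ l, F.OnlyChildPath S l ∧ x ∈ l)

/-- `W_(i)`: the forest left after `i` iterations of the pruning procedure. -/
def PForest.Wset (F : PForest) (i : ℕ) : Finset ℕ :=
  (F.prune)^[i] F.nodes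

/-- `x` is a (weak) ancestor of `y`: `x` is reachable from `y` by iterating `parent`. -/
def PForest.Ancestor (F : PForest) (x y : ℕ) : Prop :=
  Relation.ReflTransGen (fun a b => F.parent a = some b) y x

/-- `s(x)`: the number of nodes in the subtree rooted at `x`. -/
def PForest.subtreeSize (F : PForest) (x : ℕ) : ℕ :=
  (F.nodes.filter (fun y => F.Ancestor x y)).card

/-- The leaves of the forest. -/
def PForest.leaves (F : PForest) : Finset ℕ :=
  F.nodes.filter (fun x => F.children x = ∅)

theorem PForest.mem_children (F : PForest) {y x : ℕ} :
    y ∈ F.children x ↔ F.parent y = some x := by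
  unfold PForest.children
  rw [Finset.mem_filter]
  refine ⟨fun h => h.2, fun h => ⟨?_, h⟩⟩
  by_contra hn
  rw [F.parent_none_of_not_mem y hn] at h
  cases h

/-- Either no children and rank one, or exactly two children and the recursive formula. -/
theorem PForest.rank_cases (F : PForest) (x : ℕ) (hx : x ∈ F.nodes) :
    ((∀ y, F.parent y ≠ some x) ∧ F.rank x = 1) ∨
    ∃ y z, y ≠ z ∧ (∀ w, F.parent w = some x ↔ (w = y ∨ w = z)) ∧
      ((F.rank y = F.rank z ∧ F.rank x = F.rank y + 1) ∨
       (F.rank y ≠ F.rank z ∧ F.rank x = max (F.rank y) (F.rank z))) := by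
  by_cases h : (F.children x).Nonempty
  · right
    have hc : (F.children x).card = 2 := by
      rcases F.full x hx with h0 | h0
      · exact absurd (Finset.card_eq_zero.mp h0) h.ne_empty
      · exact h0
    have hmm : (F.children x).min' h < (F.children x).max' h :=
      Finset.min'_lt_max'_of_card _ (by omega)
    refine ⟨(F.children x).min' h, (F.children x).max' h, hmm.ne, ?_, ?_⟩
    · intro w
      have hsub : ({(F.children x).min' h, (F.children x).max' h} : Finset ℕ) = F.children x := by
        apply Finset.eq_of_subset_of_card_le
        · intro a ha
          simp only [Finset.mem_insert, Finset.mem_singleton] at ha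
          rcases ha with rfl | rfl
          · exact Finset.min'_mem _ h
          · exact Finset.max'_mem _ h
        · rw [Finset.card_pair hmm.ne, hc]
      rw [← F.mem_children]
      constructor
      · intro hw
        rw [← hsub] at hw
        simpa only [Finset.mem_insert, Finset.mem_singleton] using hw
      · rintro (rfl | rfl)
        · exact Finset.min'_mem _ h
        · exact Finset.max'_mem _ h
    · have hr := PForest.rank.eq_1 F x
      rw [dif_pos h] at hr
      split_ifs at hr with he
      · exact Or.inl ⟨he, hr⟩
      · exact Or.inr ⟨he, hr⟩
  · left
    refine ⟨fun y hy => h ⟨y, F.mem_children.mpr hy⟩, ?_⟩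
    rw [PForest.rank.eq_1, dif_neg h]

theorem PForest.rank_le_parent (F : PForest) {y x : ℕ} (hx : x ∈ F.nodes)
    (h : F.parent y = some x) : F.rank y ≤ F.rank x := by
  rcases F.rank_cases x hx with ⟨h0, _⟩ | ⟨a, b, _, hw, hr⟩
  · exact absurd h (h0 y)
  · rcases (hw y).mp h with rfl | rfl <;> omega

theorem PForest.rank_pos (F : PForest) (x : ℕ) : x ∈ F.nodes → 1 ≤ F.rank x := by
  induction x using Nat.strong_induction_on with
  | _ x ih =>
    intro hx
    rcases F.rank_cases x hx with ⟨_, h0⟩ | ⟨a, b, _, hw, hr⟩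
    · omega
    · have ha := F.mem_children.mpr ((hw a).mpr (Or.inl rfl))
      have := ih a (F.child_lt ha) (Finset.mem_filter.mp ha).1
      omega

/-- The nodes of rank more than `i`. -/
def PForest.above (F : PForest) (i : ℕ) : Finset ℕ := F.nodes.filter (fun x => i < F.rank x)

theorem PForest.mem_above (F : PForest) {i x : ℕ} :
    x ∈ F.above i ↔ x ∈ F.nodes ∧ i < F.rank x := by
  unfold PForest.above
  rw [Finset.mem_filter]

theorem PForest.parent_mem_above (F : PForest) {i x y : ℕ} (hx : x ∈ F.above i)
    (h : F.parent x = some y) : y ∈ F.above i := by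
  rw [F.mem_above] at *
  have hy := F.parent_mem x hx.1 y h
  exact ⟨hy, hx.2.trans_le (F.rank_le_parent hy h)⟩

theorem PForest.rank_of_leafIn (F : PForest) {i x : ℕ} (h : F.leafIn (F.above i) x) :
    F.rank x = i + 1 := by
  obtain ⟨hx, hl⟩ := h
  rw [F.mem_above] at hx
  rcases F.rank_cases x hx.1 with ⟨_, h0⟩ | ⟨a, b, _, hw, hr⟩
  · omega
  · have key : ∀ c, F.parent c = some x → F.rank c ≤ i := by
      intro c hc
      by_contra hcon
      exact hl c (F.mem_above.mpr
        ⟨(Finset.mem_filter.mp (F.mem_children.mpr hc)).1, by omega⟩) hc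
    have ha := key a ((hw a).mpr (Or.inl rfl))
    have hb := key b ((hw b).mpr (Or.inr rfl))
    omega

theorem PForest.sibling_iff (F : PForest) {i x y : ℕ} (hx : x ∈ F.nodes)
    (hr : F.rank x = i + 1) (h : F.parent x = some y) :
    F.rank y = i + 1 ↔ ¬ F.hasSiblingIn (F.above i) x := by
  have hy := F.parent_mem x hx y h
  have nodes_of : ∀ c, F.parent c = some y → c ∈ F.nodes := fun c hc =>
    (Finset.mem_filter.mp (F.mem_children.mpr hc)).1
  rcases F.rank_cases y hy with ⟨h0, _⟩ | ⟨a, b, hab, hw, hry⟩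
  · exact absurd h (h0 x)
  have ha := (hw a).mpr (Or.inl rfl)
  have hb := (hw b).mpr (Or.inr rfl)
  have key : F.hasSiblingIn (F.above i) x ↔ i < F.rank a ∧ i < F.rank b := by
    constructor
    · rintro ⟨z, hz, hzx, hp, _⟩
      rw [F.mem_above] at hz
      have hz1 := (hw z).mp (hp.trans h)
      rcases (hw x).mp h with rfl | rfl <;> rcases hz1 with rfl | rfl <;>
        first | exact absurd rfl hzx | exact ⟨by omega, by omega⟩
    · rintro ⟨h1, h2⟩
      rcases (hw x).mp h with rfl | rfl
      · exact ⟨b, F.mem_above.mpr ⟨nodes_of b hb, h2⟩, hab.symm, hb.trans h.symm, by simp [h]⟩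
      · exact ⟨a, F.mem_above.mpr ⟨nodes_of a ha, h1⟩, hab, ha.trans h.symm, by simp [h]⟩
  rw [key]
  rcases (hw x).mp h with rfl | rfl <;> omega

theorem PForest.rank_on_path (F : PForest) (i : ℕ) : ∀ l : List ℕ, (∀ x ∈ l, x ∈ F.above i) →
    List.IsChain (fun a b => F.parent a = some b) l →
    (∀ x, l.head? = some x → F.rank x = i + 1) →
    (∀ x ∈ l.dropLast, ¬ F.hasSiblingIn (F.above i) x) → ∀ x ∈ l, F.rank x = i + 1
  | [], _, _, _, _ => by simp
  | [a], _, _, hh, _ => by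
      intro x hx
      exact hh x (by simpa using (List.mem_singleton.mp hx).symm)
  | a :: b :: l, hm, hc, hh, hs => by
      have hra : F.rank a = i + 1 := hh a rfl
      rw [List.isChain_cons_cons] at hc
      have hrb : F.rank b = i + 1 :=
        (F.sibling_iff (F.mem_above.mp (hm a (by simp))).1 hra hc.1).mpr (hs a (by simp))
      intro x hx
      rcases List.mem_cons.mp hx with rfl | hx
      · exact hra
      · refine F.rank_on_path i (b :: l) (fun y hy => hm y (List.mem_cons_of_mem _ hy)) hc.2 ?_ ?_
          x hx
        · intro y hy
          cases hy
          exact hrb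
        · intro y hy
          exact hs y (by rw [List.dropLast_cons₂]; exact List.mem_cons_of_mem _ hy)

/-- `p ++ [x]` is an initial segment of an only-child-path. -/
def PForest.Pre (F : PForest) (S : Finset ℕ) (p : List ℕ) (x : ℕ) : Prop :=
  (∀ a ∈ p, a ∈ S ∧ ¬ F.hasSiblingIn S a) ∧ x ∈ S ∧
  List.IsChain (fun a b => F.parent a = some b) (p ++ [x]) ∧
  (∀ a, (p ++ [x]).head? = some a → F.leafIn S a)

theorem PForest.Pre.snoc {F : PForest} {S : Finset ℕ} {p : List ℕ} {x y : ℕ}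
    (h : F.Pre S p x) (hs : ¬ F.hasSiblingIn S x) (hp : F.parent x = some y) (hy : y ∈ S) :
    F.Pre S (p ++ [x]) y := by
  obtain ⟨h1, h2, h3, h4⟩ := h
  refine ⟨?_, hy, ?_, ?_⟩
  · intro a ha
    rcases List.mem_append.mp ha with ha | ha
    · exact h1 a ha
    · rw [List.mem_singleton.mp ha]
      exact ⟨h2, hs⟩
  · rw [List.isChain_append]
    refine ⟨h3, by simp, ?_⟩
    intro a ha b hb
    simp at ha hb
    subst ha hb
    exact hp
  · intro a ha
    apply h4
    rw [List.head?_append] at ha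
    cases hq : (p ++ [x]).head? with
    | none => simp at hq
    | some b => rw [hq] at ha; simpa using ha

theorem PForest.exists_pre (F : PForest) (i x : ℕ) :
    x ∈ F.above i → F.rank x = i + 1 → ∃ p, F.Pre (F.above i) p x := by
  induction x using Nat.strong_induction_on with
  | _ x ih =>
    intro hx hr
    by_cases hl : F.leafIn (F.above i) x
    · refine ⟨[], by simp, hx, by simp, ?_⟩
      intro a ha
      simp at ha
      subst ha
      exact hl
    · have : ∃ y ∈ F.above i, F.parent y = some x := by
        by_contra hcon
        push Not at hcon
        exact hl ⟨hx, hcon⟩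
      obtain ⟨y, hy, hyx⟩ := this
      have hy' := F.mem_above.mp hy
      have hry : F.rank y = i + 1 := by
        have := F.rank_le_parent (F.mem_above.mp hx).1 hyx
        omega
      obtain ⟨p, hp⟩ := ih y (F.parent_lt _ _ hyx) hy hry
      exact ⟨p ++ [y], hp.snoc ((F.sibling_iff hy'.1 hry hyx).mp hr) hyx hx⟩

theorem PForest.exists_path (F : PForest) (i : ℕ) : ∀ n x p, F.nodes.sup id ≤ x + n →
    F.Pre (F.above i) p x →
    ∃ l, F.OnlyChildPath (F.above i) l ∧ ∀ a ∈ p ++ [x], a ∈ l := by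
  intro n
  induction n with
  | zero =>
    intro x p hn h
    have hnone : F.parent x = none := by
      cases hq : F.parent x with
      | none => rfl
      | some y =>
        have hy := (F.mem_above.mp (F.parent_mem_above h.2.1 hq)).1
        have h1 := Finset.le_sup (f := id) hy
        have h2 := F.parent_lt _ _ hq
        simp only [id] at h1
        omega
    refine ⟨p ++ [x], ⟨by simp, ?_, h.2.2.1, h.2.2.2, ?_, ?_⟩, fun a ha => ha⟩
    · intro a ha
      rcases List.mem_append.mp ha with ha | ha
      · exact (h.1 a ha).1
      · rw [List.mem_singleton.mp ha]; exact h.2.1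
    · intro a ha
      rw [List.dropLast_concat] at ha
      exact (h.1 a ha).2
    · intro a ha
      simp at ha
      subst ha
      exact Or.inr hnone
  | succ n ih =>
    intro x p hn h
    by_cases hend : F.hasSiblingIn (F.above i) x ∨ F.parent x = none
    · refine ⟨p ++ [x], ⟨by simp, ?_, h.2.2.1, h.2.2.2, ?_, ?_⟩, fun a ha => ha⟩
      · intro a ha
        rcases List.mem_append.mp ha with ha | ha
        · exact (h.1 a ha).1
        · rw [List.mem_singleton.mp ha]; exact h.2.1
      · intro a ha
        rw [List.dropLast_concat] at ha
        exact (h.1 a ha).2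
      · intro a ha
        simp at ha
        subst ha
        exact hend
    · rw [not_or] at hend
      obtain ⟨y, hy⟩ := Option.ne_none_iff_exists'.mp hend.2
      have hlt := F.parent_lt _ _ hy
      obtain ⟨l, hl, hm⟩ := ih y (p ++ [x]) (by omega)
        (h.snoc hend.1 hy (F.parent_mem_above h.2.1 hy))
      exact ⟨l, hl, fun a ha => hm a (List.mem_append_left _ ha)⟩

theorem PForest.prune_above (F : PForest) (i : ℕ) :
    F.prune (F.above i) = F.above (i + 1) := by
  ext x
  unfold PForest.prune
  rw [Finset.mem_filter]
  constructor
  · rintro ⟨hx, hno⟩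
    have hx' := F.mem_above.mp hx
    refine F.mem_above.mpr ⟨hx'.1, ?_⟩
    by_contra hcon
    obtain ⟨p, hp⟩ := F.exists_pre i x hx (by omega)
    obtain ⟨l, hl, hm⟩ := F.exists_path i (F.nodes.sup id) x p (by omega) hp
    exact hno ⟨l, hl, hm x (by simp)⟩
  · intro hx
    have hx' := F.mem_above.mp hx
    refine ⟨F.mem_above.mpr ⟨hx'.1, by omega⟩, ?_⟩
    rintro ⟨l, ⟨_, hS, hc, hh, hs, _⟩, hxl⟩
    have := F.rank_on_path i l hS hc (fun y hy => F.rank_of_leafIn (hh y hy)) hs x hxl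
    omega

theorem PForest.Wset_eq (F : PForest) (i : ℕ) : F.Wset i = F.above i := by
  induction i with
  | zero =>
    ext x
    rw [F.mem_above]
    exact ⟨fun h => ⟨h, F.rank_pos x h⟩, fun h => h.1⟩
  | succ i ih =>
    rw [← F.prune_above, ← ih]
    unfold PForest.Wset
    rw [Function.iterate_succ_apply']

/-- Every node `x` of a full binary forest is deleted by the pruning
procedure exactly in the `r(x)`-th iteration: `x ∈ W_(r(x)−1)` and `x ∉ W_(r(x))`. -/
theorem pruned_at_rank (F : PForest) (x : ℕ) (hx : x ∈ F.nodes) :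
    x ∈ F.Wset (F.rank x - 1) ∧ x ∉ F.Wset (F.rank x) := by
  have h := F.rank_pos x hx
  rw [F.Wset_eq, F.Wset_eq, F.mem_above, F.mem_above]
  exact ⟨⟨hx, by omega⟩, fun h' => absurd h'.2 (lt_irrefl _)⟩
end
end

section
/- Let W be a full binary forest with n₀ ≥ 1 leaves. Then the pruning procedure deletes every node of W within at most 1 + log₂(n₀) iterations; that is, W_(i) is empty for every integer i ≥ 1 + log₂(n₀). -/
noncomputable section
open scoped Classical

theorem PForest.prune_subset (F : PForest) (S : Finset ℕ) : F.prune S ⊆ S :=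
  Finset.filter_subset _ _

/-- Up-closed node sets. -/
def PForest.UpClosed (F : PForest) (S : Finset ℕ) : Prop :=
  S ⊆ F.nodes ∧ ∀ x ∈ S, ∀ y, F.parent x = some y → y ∈ S

theorem PForest.prune_upClosed (F : PForest) (S : Finset ℕ) (hS : F.UpClosed S) :
    F.UpClosed (F.prune S) := by
  refine ⟨(F.prune_subset S).trans hS.1, ?_⟩
  intro y hy x hyx
  have hy0 := hy
  simp only [PForest.prune, Finset.mem_filter] at hy ⊢
  obtain ⟨hyS, hyn⟩ := hy
  refine ⟨hS.2 y hyS x hyx, ?_⟩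
  rintro ⟨l, hl, hxl⟩
  have hl' := hl
  obtain ⟨hne, hmem, hch, hhead, hdrop, hlast⟩ := hl
  obtain ⟨a, b, rfl⟩ := List.append_of_mem hxl
  rcases List.eq_nil_or_concat a with rfl | ⟨a', z, rfl⟩
  · exact (hhead x (by simp)).2 y hyS hyx
  · have hzx : F.parent z = some x := by
      have hch2 : List.IsChain (fun a b => F.parent a = some b) ((a' ++ [z]) ++ x :: b) := by
        rw [List.concat_eq_append] at hch
        exact hch
      rw [List.isChain_append] at hch2
      exact hch2.2.2 z (by simp) x (by simp)
    by_cases hzy : y = z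
    · subst hzy
      exact hyn ⟨_, hl', by simp⟩
    · refine hdrop z ?_ ⟨y, hyS, hzy, by rw [hyx, hzx], by simp [hzx]⟩
      rw [List.dropLast_append_of_ne_nil (by simp)]
      simp

theorem PForest.exists_path_s12 (F : PForest) (S : Finset ℕ) (hS : F.UpClosed S) :
    ∀ k x, x ∈ S → F.nodes.sup id - x = k →
      ∃ l : List ℕ, (∀ y ∈ x :: l, y ∈ S) ∧
        List.IsChain (fun a b => F.parent a = some b) (x :: l) ∧
        (∀ y ∈ (x :: l).dropLast, ¬ F.hasSiblingIn S y) ∧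
        (∀ y, (x :: l).getLast? = some y → (F.hasSiblingIn S y ∨ F.parent y = none)) := by
  intro k
  induction k using Nat.strong_induction_on with
  | _ k ih =>
    intro x hx hk
    by_cases hs : F.hasSiblingIn S x ∨ F.parent x = none
    · exact ⟨[], by simpa using hx, by simp, by simp, by simpa using hs⟩
    · push Not at hs
      obtain ⟨p, hp⟩ := Option.ne_none_iff_exists'.mp hs.2
      have hpS := hS.2 x hx p hp
      have hle : p ≤ F.nodes.sup id := Finset.le_sup (f := id) (hS.1 hpS)
      have hlt := F.parent_lt x p hp
      obtain ⟨l, h1, h2, h3, h4⟩ := ih (F.nodes.sup id - p) (by omega) p hpS rfl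
      refine ⟨p :: l, ?_, ?_, ?_, ?_⟩
      · intro y hy
        rcases List.mem_cons.mp hy with rfl | hy
        · exact hx
        · exact h1 y hy
      · rw [List.isChain_cons_cons]
        exact ⟨hp, h2⟩
      · intro y hy
        rw [List.dropLast_cons_of_ne_nil (by simp)] at hy
        rcases List.mem_cons.mp hy with rfl | hy
        · exact hs.1
        · exact h3 y hy
      · intro y hy
        rw [List.getLast?_cons_cons] at hy
        exact h4 y hy

theorem PForest.exists_branch (F : PForest) (S : Finset ℕ) (hS : F.UpClosed S) :
    ∀ x, x ∈ F.prune S → ∃ z y₁ y₂, F.Ancestor x z ∧ y₁ ∈ S ∧ y₂ ∈ S ∧ y₁ ≠ y₂ ∧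
      F.parent y₁ = some z ∧ F.parent y₂ = some z := by
  intro x
  induction x using Nat.strong_induction_on with
  | _ x ih =>
    intro hx
    have hx' := hx
    simp only [PForest.prune, Finset.mem_filter] at hx'
    obtain ⟨hxS, hxn⟩ := hx'
    have hc : ∃ y ∈ S, F.parent y = some x := by
      by_contra hcon
      push Not at hcon
      obtain ⟨l, h1, h2, h3, h4⟩ := F.exists_path_s12 S hS _ x hxS rfl
      refine hxn ⟨x :: l, ⟨by simp, h1, h2, ?_, h3, h4⟩, by simp⟩
      intro y hy
      simp only [List.head?_cons, Option.some.injEq] at hy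
      subst hy
      exact ⟨hxS, hcon⟩
    obtain ⟨y, hyS, hyx⟩ := hc
    by_cases h2 : ∃ y' ∈ S, y' ≠ y ∧ F.parent y' = some x
    · obtain ⟨y', hy'S, hne, hy'⟩ := h2
      exact ⟨x, y', y, Relation.ReflTransGen.refl, hy'S, hyS, hne, hy', hyx⟩
    · have hyp : y ∈ F.prune S := by
        by_contra hcon
        simp only [PForest.prune, Finset.mem_filter, not_and, not_not] at hcon
        obtain ⟨l, hl, hyl⟩ := hcon hyS
        apply hxn
        refine ⟨l, hl, ?_⟩
        obtain ⟨hne, hmem, hch, hhead, hdrop, hlast⟩ := hl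
        obtain ⟨a, b, rfl⟩ := List.append_of_mem hyl
        cases b with
        | nil =>
          rcases hlast y (by simp) with ⟨w, hw, hwy, hwp, _⟩ | h
          · exact absurd ⟨w, hw, hwy, hwp.trans hyx⟩ h2
          · simp [hyx] at h
        | cons w b =>
          have hch2 : List.IsChain (fun a b => F.parent a = some b) (a ++ y :: w :: b) := hch
          rw [List.isChain_append, List.isChain_cons_cons] at hch2
          have := hch2.2.1.1
          rw [hyx] at this
          simp only [Option.some.injEq] at this
          simp [this]
      obtain ⟨z, y₁, y₂, hz, hr⟩ := ih y (F.parent_lt y x hyx) hyp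
      exact ⟨z, y₁, y₂, Relation.ReflTransGen.tail hz hyx, hr⟩

/-- Leaves below a node. -/
def PForest.leavesBelow (F : PForest) (x : ℕ) : Finset ℕ :=
  F.leaves.filter (fun y => F.Ancestor x y)

theorem PForest.ancestor_le (F : PForest) {x y : ℕ} (h : F.Ancestor x y) : y ≤ x := by
  induction h with
  | refl => exact le_rfl
  | tail _ h ih => exact ih.trans (F.parent_lt _ _ h).le

theorem PForest.not_ancestor_sibling (F : PForest) {y₁ y₂ z : ℕ} (hne : y₁ ≠ y₂)
    (h1 : F.parent y₁ = some z) (h2 : F.parent y₂ = some z) : ¬ F.Ancestor y₂ y₁ := by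
  intro h
  rcases Relation.ReflTransGen.cases_head h with h | ⟨c, hc, h⟩
  · exact hne h
  · rw [h1] at hc
    simp only [Option.some.injEq] at hc
    subst hc
    have := F.ancestor_le h
    have := F.parent_lt _ _ h2
    omega

theorem PForest.exists_leaf (F : PForest) : ∀ x ∈ F.nodes, (F.leavesBelow x).Nonempty := by
  intro x
  induction x using Nat.strong_induction_on with
  | _ x ih =>
    intro hx
    rcases Finset.eq_empty_or_nonempty (F.children x) with h | ⟨y, hy⟩
    · exact ⟨x, Finset.mem_filter.mpr ⟨Finset.mem_filter.mpr ⟨hx, h⟩,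
        Relation.ReflTransGen.refl⟩⟩
    · have hy' := hy
      simp only [PForest.children, Finset.mem_filter] at hy'
      obtain ⟨w, hw⟩ := ih y (F.child_lt hy) hy'.1
      simp only [PForest.leavesBelow, Finset.mem_filter] at hw
      refine ⟨w, ?_⟩
      simp only [PForest.leavesBelow, Finset.mem_filter]
      exact ⟨hw.1, Relation.ReflTransGen.tail hw.2 hy'.2⟩

theorem PForest.Wset_succ (F : PForest) (i : ℕ) : F.Wset (i + 1) = F.prune (F.Wset i) := by
  simp only [PForest.Wset, Function.iterate_succ_apply']

theorem PForest.Wset_upClosed (F : PForest) (i : ℕ) : F.UpClosed (F.Wset i) := by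
  induction i with
  | zero => exact ⟨Finset.Subset.refl _, F.parent_mem⟩
  | succ i ih =>
    rw [F.Wset_succ]
    exact F.prune_upClosed _ ih

theorem PForest.two_pow_le (F : PForest) (i : ℕ) :
    ∀ x ∈ F.Wset i, 2 ^ i ≤ (F.leavesBelow x).card := by
  induction i with
  | zero =>
    intro x hx
    have := Finset.card_pos.mpr (F.exists_leaf x hx)
    simpa using this
  | succ i ih =>
    intro x hx
    rw [F.Wset_succ] at hx
    obtain ⟨z, y₁, y₂, hz, hy₁, hy₂, hne, hp₁, hp₂⟩ := F.exists_branch _ (F.Wset_upClosed i) x hx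
    have hdisj : Disjoint (F.leavesBelow y₁) (F.leavesBelow y₂) := by
      rw [Finset.disjoint_left]
      intro w hw1 hw2
      simp only [PForest.leavesBelow, Finset.mem_filter] at hw1 hw2
      have huniq : Relator.RightUnique (fun a b => F.parent a = some b) := by
        intro a b c hab hac
        rw [hab] at hac
        simpa using hac
      rcases Relation.ReflTransGen.total_of_right_unique huniq hw1.2 hw2.2 with h | h
      · exact F.not_ancestor_sibling hne hp₁ hp₂ h
      · exact F.not_ancestor_sibling hne.symm hp₂ hp₁ h
    have hsub : F.leavesBelow y₁ ∪ F.leavesBelow y₂ ⊆ F.leavesBelow x := by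
      intro w hw
      simp only [PForest.leavesBelow, Finset.mem_filter, Finset.mem_union] at hw ⊢
      rcases hw with hw | hw
      · exact ⟨hw.1, (Relation.ReflTransGen.tail hw.2 hp₁).trans hz⟩
      · exact ⟨hw.1, (Relation.ReflTransGen.tail hw.2 hp₂).trans hz⟩
    have h := Finset.card_le_card hsub
    rw [Finset.card_union_of_disjoint hdisj] at h
    have h1 := ih y₁ hy₁
    have h2 := ih y₂ hy₂
    rw [pow_succ]
    omega

/-- If a full binary forest has `n₀ ≥ 1` leaves, then the pruning
procedure deletes every node within at most `1 + log₂ n₀` iterations: `W_(i)` is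
empty for every integer `i ≥ 1 + log₂ n₀`. -/
theorem pruning_terminates (F : PForest) (n₀ : ℕ) (hn : F.leaves.card = n₀)
    (h1 : 1 ≤ n₀) (i : ℕ) (hi : 1 + Real.logb 2 (n₀ : ℝ) ≤ (i : ℝ)) :
    F.Wset i = ∅ := by
  rw [Finset.eq_empty_iff_forall_notMem]
  intro x hx
  have h2 : 2 ^ i ≤ n₀ := by
    rw [← hn]
    exact (F.two_pow_le i x hx).trans (Finset.card_le_card (Finset.filter_subset _ _))
  have h3 : (2 : ℝ) ^ (i : ℝ) ≤ (n₀ : ℝ) := by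
    rw [Real.rpow_natCast]
    exact_mod_cast h2
  have h4 : (i : ℝ) ≤ Real.logb 2 (n₀ : ℝ) := by
    rw [Real.le_logb_iff_rpow_le (by norm_num) (by exact_mod_cast h1)]
    exact h3
  linarith
end
end

section
/- Let W be a full binary forest and consider the pruning procedure on W. Then for every i ≥ 1, the set of only-child-paths of W_(i−1) is a set of ascending paths of the original forest W whose endpoints are pairwise distinct and form an independent set of nodes of W; moreover, the nodes deleted in the i-th iteration are exactly the nodes lying on these paths. -/
noncomputable section
open scoped Classical

/-- Paths from a leaf of `S` up to `x`, with no siblings strictly before the end. -/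
inductive PForest.UpPath (F : PForest) (S : Finset ℕ) : ℕ → List ℕ → Prop
  | base (x : ℕ) : F.leafIn S x → PForest.UpPath F S x [x]
  | step (x y : ℕ) (l : List ℕ) : PForest.UpPath F S y l → F.parent y = some x →
      ¬ F.hasSiblingIn S y → PForest.UpPath F S x (l ++ [x])

theorem PForest.upPath_of_list (F : PForest) (S : Finset ℕ) (l : List ℕ) :
    ∀ x, (∀ y ∈ l ++ [x], y ∈ S) →
    (l ++ [x]).IsChain (fun a b => F.parent a = some b) →
    (∀ y, (l ++ [x]).head? = some y → F.leafIn S y) →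
    (∀ y ∈ l, ¬ F.hasSiblingIn S y) → F.UpPath S x (l ++ [x]) := by
  induction l using List.reverseRecOn with
  | nil =>
    intro x _ _ h _
    exact UpPath.base x (h x (by simp))
  | append_singleton l y ih =>
    intro x hS hc hh hs
    refine UpPath.step x y _ (ih y ?_ ?_ ?_ ?_) ?_ (hs y (by simp))
    · intro z hz
      exact hS z (List.mem_append_left _ hz)
    · exact (List.isChain_append.mp hc).1
    · intro z hz
      apply hh z
      rw [List.head?_append, hz]
      rfl
    · intro z hz
      exact hs z (List.mem_append_left _ hz)
    · exact (List.isChain_append.mp hc).2.2 y (by simp) x (by simp)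

theorem PForest.OnlyChildPath.upPath {F : PForest} {S : Finset ℕ} {l : List ℕ} {x : ℕ}
    (h : F.OnlyChildPath S l) (hx : l.getLast? = some x) : F.UpPath S x l := by
  obtain ⟨h0, hS, hc, hh, hs, -⟩ := h
  obtain ⟨m, rfl⟩ := List.getLast?_eq_some_iff.mp hx
  exact F.upPath_of_list S m x hS hc hh (by simpa using hs)

theorem PForest.UpPath.last_mem {F : PForest} {S : Finset ℕ} {l : List ℕ} {x : ℕ}
    (h : F.UpPath S x l) : x ∈ l := by
  cases h <;> simp

theorem PForest.not_sib_unique {F : PForest} {S : Finset ℕ} {y z x : ℕ}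
    (hy : ¬ F.hasSiblingIn S y) (hz : z ∈ S) (hyx : F.parent y = some x)
    (hzx : F.parent z = some x) : z = y := by
  by_contra hne
  exact hy ⟨z, hz, hne, by rw [hzx, hyx], by simp [hyx]⟩

theorem PForest.UpPath.child_mem {F : PForest} {S : Finset ℕ} {l : List ℕ} {x : ℕ}
    (h : F.UpPath S x l) : ∀ w ∈ l, ∀ z ∈ S, F.parent z = some w →
      z ∈ l ∧ ¬ F.hasSiblingIn S z := by
  induction h with
  | base x hl =>
    intro w hw z hz hp
    rw [List.mem_singleton] at hw
    subst hw
    exact absurd hp (hl.2 z hz)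
  | step x y l hl hp hs ih =>
    intro w hw z hz hpz
    rcases List.mem_append.mp hw with hw | hw
    · exact ⟨List.mem_append_left _ (ih w hw z hz hpz).1, (ih w hw z hz hpz).2⟩
    · rw [List.mem_singleton] at hw
      subst hw
      have := PForest.not_sib_unique hs hz hp hpz
      subst this
      exact ⟨List.mem_append_left _ hl.last_mem, hs⟩

theorem PForest.UpPath.unique {F : PForest} {S : Finset ℕ} {l : List ℕ} {x : ℕ}
    (h : F.UpPath S x l) (hS : ∀ z ∈ l, z ∈ S) :
    ∀ l', (∀ z ∈ l', z ∈ S) → F.UpPath S x l' → l = l' := by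
  induction h with
  | base x hl =>
    intro l' hS' h'
    cases h' with
    | base _ _ => rfl
    | step _ y m hm hp hs =>
      exact absurd hp (hl.2 y (hS' y (List.mem_append_left _ hm.last_mem)))
  | step x y l hl hp hs ih =>
    intro l' hS' h'
    cases h' with
    | base _ hx =>
      exact absurd hp (hx.2 y (hS y (List.mem_append_left _ hl.last_mem)))
    | step _ y' m hm hp' hs' =>
      have := PForest.not_sib_unique hs (hS' y' (List.mem_append_left _ hm.last_mem)) hp hp'
      subst this
      rw [ih (fun z hz => hS z (List.mem_append_left _ hz)) m
        (fun z hz => hS' z (List.mem_append_left _ hz)) hm]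

theorem PForest.OnlyChildPath.exists_last {F : PForest} {S : Finset ℕ} {l : List ℕ}
    (h : F.OnlyChildPath S l) : ∃ x, l.getLast? = some x :=
  ⟨l.getLast h.1, List.getLast?_eq_some_getLast h.1⟩

theorem PForest.Wset_subset (F : PForest) (i : ℕ) : F.Wset i ⊆ F.nodes := by
  induction i with
  | zero => exact Finset.Subset.refl _
  | succ i ih =>
    rw [F.Wset_succ]
    exact (Finset.filter_subset _ _).trans ih

theorem PForest.Wset_up (F : PForest) (i : ℕ) :
    ∀ x ∈ F.Wset i, ∀ y, F.parent x = some y → y ∈ F.Wset i := by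
  induction i with
  | zero => exact F.parent_mem
  | succ i ih =>
    rw [F.Wset_succ]
    intro x hx y hy
    obtain ⟨hx, hn⟩ := Finset.mem_filter.mp hx
    refine Finset.mem_filter.mpr ⟨ih x hx y hy, ?_⟩
    rintro ⟨l, hl, hyl⟩
    obtain ⟨e, he⟩ := hl.exists_last
    exact hn ⟨l, hl, ((hl.upPath he).child_mem y hyl x hx hy).1⟩

theorem PForest.UpPath.desc_mem {F : PForest} {S : Finset ℕ} {l : List ℕ} {x y : ℕ}
    (h : F.UpPath S x l) (hup : ∀ x ∈ S, ∀ y, F.parent x = some y → y ∈ S)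
    (ha : F.Ancestor x y) : y ∈ S → y ∈ l := by
  induction ha using Relation.ReflTransGen.head_induction_on with
  | refl => intro _; exact h.last_mem
  | head hp _ ih =>
    intro hy
    exact (h.child_mem _ (ih (hup _ hy _ hp)) _ hy hp).1

/-- For every `i ≥ 1`, the only-child-paths of `W_(i−1)` are
ascending paths of the original forest `W`, their endpoints are pairwise distinct and
form an independent set of nodes of `W` (none is a proper ancestor of another), and
the nodes deleted in the `i`-th iteration are exactly the nodes lying on these
paths. -/
theorem pruning_paths_independent (F : PForest) (i : ℕ) (hi : 1 ≤ i) :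
    (∀ l, F.OnlyChildPath (F.Wset (i-1)) l → F.IsAscPath l) ∧
    (∀ l₁ l₂ x₁ x₂, F.OnlyChildPath (F.Wset (i-1)) l₁ →
      F.OnlyChildPath (F.Wset (i-1)) l₂ →
      l₁.getLast? = some x₁ → l₂.getLast? = some x₂ →
      (l₁ ≠ l₂ → x₁ ≠ x₂) ∧ (x₁ ≠ x₂ → ¬ F.Ancestor x₁ x₂)) ∧
    (∀ x, (x ∈ F.Wset (i-1) ∧ x ∉ F.Wset i) ↔
      ∃ l, F.OnlyChildPath (F.Wset (i-1)) l ∧ x ∈ l) := by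
  obtain ⟨i, rfl⟩ : ∃ j, i = j + 1 := ⟨i - 1, by omega⟩
  rw [Nat.add_sub_cancel, F.Wset_succ]
  have hup := F.Wset_up i
  have hsub := F.Wset_subset i
  generalize F.Wset i = S at hup hsub
  refine ⟨?_, ?_, ?_⟩
  · intro l hl
    exact ⟨hl.1, fun x hx => hsub (hl.2.1 x hx), hl.2.2.1⟩
  · intro l₁ l₂ x₁ x₂ h₁ h₂ e₁ e₂
    refine ⟨?_, ?_⟩
    · intro hne heq
      subst heq
      exact hne ((h₁.upPath e₁).unique h₁.2.1 l₂ h₂.2.1 (h₂.upPath e₂))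
    · intro hne ha
      have hx₂ : x₂ ∈ S := h₂.2.1 _ (h₂.upPath e₂).last_mem
      rcases Relation.ReflTransGen.cases_head ha with h | ⟨c, hc, hca⟩
      · exact hne h.symm
      · have hcl := (h₁.upPath e₁).desc_mem hup hca (hup _ hx₂ _ hc)
        have hns := ((h₁.upPath e₁).child_mem c hcl x₂ hx₂ hc).2
        rcases h₂.2.2.2.2.2 x₂ e₂ with h | h
        · exact hns h
        · rw [h] at hc
          cases hc
  · intro x
    unfold PForest.prune
    rw [Finset.mem_filter]
    constructor
    · rintro ⟨hx, hn⟩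
      by_contra hc
      exact hn ⟨hx, hc⟩
    · rintro ⟨l, hl, hx⟩
      exact ⟨hl.2.1 x hx, fun h => h.2 ⟨l, hl, hx⟩⟩
end
end

section
/- For every integer k ≥ 1 there exists a tower (K_i, φ_i) with K₀ = ∅ whose maps are elementary inclusions or elementary contractions, having n₀ = 2^{k+1} elementary inclusions of vertices and n = 3·2^k elementary inclusions in total (namely 2^{k+1} vertices a₁,…,a_{2^k}, b₁,…,b_{2^k} and the 2^k pairwise disjoint edges {a_j, b_j}, followed by 2^k − 1 elementary contractions of the a-vertices whose contracting forest is a fully balanced binary tree), such that its coning filtration satisfies |K̂_m| ≥ n + k·2^{k−1}. In particular, the coning construction can produce a filtration of size Ω(n·log n₀). -/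
noncomputable section
open scoped Classical

/-- `n`, the number of elementary inclusions of the tower. -/
def ConedTower.numIncl {V : Type*} [DecidableEq V] (T : ConedTower V) : ℕ :=
  ((Finset.range T.m).filter (fun i => ∃ σ, T.step i = Sum.inl σ)).card

/-- `n₀`, the number of elementary inclusions of vertices (0-simplices). -/
def ConedTower.numVertexIncl {V : Type*} [DecidableEq V] (T : ConedTower V) : ℕ :=
  ((Finset.range T.m).filter (fun i => ∃ w : V, T.step i = Sum.inl {w})).card

/-! ### Helper material for the proof -/

/-- Extend a coned tower by one step at the end. -/
theorem ConedTower.extend (T : ConedTower ℕ) (s : (Finset ℕ) ⊕ (ℕ × ℕ))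
    (K' H' : Finset (Finset ℕ)) (A' : Finset ℕ)
    (hcard : ∀ i ≤ T.m, ∀ σ ∈ T.K i, σ.card ≤ 2)
    (hcard' : ∀ σ ∈ K', σ.card ≤ 2)
    (hc : IsComplex K')
    (hi : ∀ σ, s = Sum.inl σ →
      σ.Nonempty ∧ σ ∉ T.K T.m ∧ K' = insert σ (T.K T.m) ∧
      H' = insert σ (T.hatK T.m) ∧
      A' = (if σ.card = 1 then T.act T.m ∪ σ else T.act T.m))
    (hr : ∀ u v, s = Sum.inr (u, v) →
      u ≠ v ∧ ({u} : Finset ℕ) ∈ T.K T.m ∧ ({v} : Finset ℕ) ∈ T.K T.m ∧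
      (if (actCst u (T.hatK T.m) (T.act T.m)).card ≤ (actCst v (T.hatK T.m) (T.act T.m)).card then
        K' = (T.K T.m).image (fun σ => σ.image (contract u v)) ∧
        H' = T.hatK T.m ∪ (actCst u (T.hatK T.m) (T.act T.m)).image (fun τ => insert v τ) ∧
        A' = (T.act T.m).erase u
      else
        K' = (T.K T.m).image (fun σ => σ.image (contract v u)) ∧
        H' = T.hatK T.m ∪ (actCst v (T.hatK T.m) (T.act T.m)).image (fun τ => insert u τ) ∧
        A' = (T.act T.m).erase v)) :
    ∃ T' : ConedTower ℕ,
      T'.numVertexIncl = T.numVertexIncl + (if ∃ w : ℕ, s = Sum.inl {w} then 1 else 0) ∧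
      T'.numIncl = T.numIncl + (if ∃ σ, s = Sum.inl σ then 1 else 0) ∧
      (∀ i ≤ T'.m, ∀ σ ∈ T'.K i, σ.card ≤ 2) ∧
      T'.K T'.m = K' ∧ T'.hatK T'.m = H' ∧ T'.act T'.m = A' := by
  refine ⟨{
    m := T.m + 1
    K := fun i => if i ≤ T.m then T.K i else K'
    hatK := fun i => if i ≤ T.m then T.hatK i else H'
    act := fun i => if i ≤ T.m then T.act i else A'
    step := fun i => if i < T.m then T.step i else s
    K_zero := by simp [T.K_zero]
    hatK_zero := by simp [T.hatK_zero]
    act_zero := by simp [T.act_zero]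
    complex := ?_
    step_incl := ?_
    step_contr := ?_ }, ?_, ?_, ?_, ?_, ?_, ?_⟩
  · intro i _
    by_cases h : i ≤ T.m
    · simpa [h] using T.complex i h
    · simpa [h] using hc
  · intro i him σ hs
    by_cases h : i < T.m
    · have h1 : i ≤ T.m := h.le
      have h2 : i + 1 ≤ T.m := h
      simp only [h, if_true] at hs
      simp only [h1, h2, if_true]
      exact T.step_incl i h σ hs
    · have h0 : i = T.m := by omega
      subst h0
      simp only [lt_irrefl, if_false] at hs
      have h2 : ¬ (T.m + 1 ≤ T.m) := by omega
      simp only [le_refl, h2, if_true, if_false]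
      exact hi σ hs
  · intro i him u v hs
    by_cases h : i < T.m
    · have h1 : i ≤ T.m := h.le
      have h2 : i + 1 ≤ T.m := h
      simp only [h, if_true] at hs
      simp only [h1, h2, if_true]
      exact T.step_contr i h u v hs
    · have h0 : i = T.m := by omega
      subst h0
      simp only [lt_irrefl, if_false] at hs
      have h2 : ¬ (T.m + 1 ≤ T.m) := by omega
      simp only [le_refl, h2, if_true, if_false]
      exact hr u v hs
  · unfold ConedTower.numVertexIncl
    simp only
    rw [Finset.card_filter, Finset.card_filter, Finset.sum_range_succ]
    congr 1
    · apply Finset.sum_congr rfl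
      intro i hi
      simp only [Finset.mem_range.mp hi, if_true]
    · simp only [lt_irrefl, if_false]
  · unfold ConedTower.numIncl
    simp only
    rw [Finset.card_filter, Finset.card_filter, Finset.sum_range_succ]
    congr 1
    · apply Finset.sum_congr rfl
      intro i hi
      simp only [Finset.mem_range.mp hi, if_true]
    · simp only [lt_irrefl, if_false]
  · intro i _ σ hσ
    by_cases h : i ≤ T.m
    · simp only [h, if_true] at hσ
      exact hcard i h σ hσ
    · simp only [h, if_false] at hσ
      exact hcard' σ hσ
  · simp
  · simp
  · simp

/-- A reachable end state of a tower of dimension at most one, with vertices below `N`. -/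
structure Reach (n0 n N : ℕ) (K H : Finset (Finset ℕ)) (A : Finset ℕ) : Prop where
  ex : ∃ T : ConedTower ℕ, T.numVertexIncl = n0 ∧ T.numIncl = n ∧
    (∀ i ≤ T.m, ∀ σ ∈ T.K i, σ.card ≤ 2) ∧
    T.K T.m = K ∧ T.hatK T.m = H ∧ T.act T.m = A
  bK : ∀ σ ∈ K, ∀ x ∈ σ, x < N
  bH : ∀ σ ∈ H, ∀ x ∈ σ, x < N
  bA : ∀ x ∈ A, x < N

theorem reach_empty : Reach 0 0 0 ∅ ∅ ∅ := by
  refine ⟨⟨{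
    m := 0
    K := fun _ => ∅
    hatK := fun _ => ∅
    act := fun _ => ∅
    step := fun _ => Sum.inl ∅
    K_zero := rfl
    hatK_zero := rfl
    act_zero := rfl
    complex := by simp [IsComplex]
    step_incl := by simp
    step_contr := by simp },
    ?_⟩, by simp, by simp, by simp⟩
  simp [ConedTower.numVertexIncl, ConedTower.numIncl]

/-- Inclusion of the fresh vertex `N`. -/
theorem Reach.vertex {n0 n N : ℕ} {K H : Finset (Finset ℕ)} {A : Finset ℕ}
    (h : Reach n0 n N K H A) :
    Reach (n0 + 1) (n + 1) (N + 1) (insert {N} K) (insert {N} H) (A ∪ {N}) := by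
  obtain ⟨⟨T, rfl, rfl, hd, rfl, rfl, rfl⟩, bK, bH, bA⟩ := h
  have hcx := T.complex T.m le_rfl
  refine ⟨?_, ?_, ?_, ?_⟩
  · obtain ⟨T', h1, h2, h3⟩ := T.extend (Sum.inl {N}) (insert {N} (T.K T.m))
      (insert {N} (T.hatK T.m)) (T.act T.m ∪ {N}) hd
      (by
        intro σ hσ
        rcases Finset.mem_insert.mp hσ with rfl | hσ
        · simp
        · exact hd _ le_rfl _ hσ)
      (by
        intro σ hσ
        rcases Finset.mem_insert.mp hσ with rfl | hσ
        · refine ⟨by simp, fun τ hτ hne => ?_⟩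
          rcases Finset.subset_singleton_iff.mp hτ with rfl | rfl
          · simp at hne
          · simp
        · exact ⟨(hcx σ hσ).1, fun τ hτ hne =>
            Finset.mem_insert_of_mem ((hcx σ hσ).2 τ hτ hne)⟩)
      (by
        intro σ hσ
        cases hσ
        refine ⟨by simp, fun hm => ?_, rfl, rfl, by simp⟩
        exact lt_irrefl _ (bK _ hm N (by simp)))
      (by intro u v hs; cases hs)
    refine ⟨T', ?_, ?_, h3⟩
    · rw [h1, if_pos ⟨N, rfl⟩]
    · rw [h2, if_pos ⟨_, rfl⟩]
  · intro σ hσ x hx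
    rcases Finset.mem_insert.mp hσ with rfl | hσ
    · simp at hx; omega
    · exact (bK σ hσ x hx).trans (Nat.lt_succ_self N)
  · intro σ hσ x hx
    rcases Finset.mem_insert.mp hσ with rfl | hσ
    · simp at hx; omega
    · exact (bH σ hσ x hx).trans (Nat.lt_succ_self N)
  · intro x hx
    rcases Finset.mem_union.mp hx with hx | hx
    · exact (bA x hx).trans (Nat.lt_succ_self N)
    · simp at hx; omega

/-- Inclusion of an edge. -/
theorem Reach.edge {n0 n N : ℕ} {K H : Finset (Finset ℕ)} {A : Finset ℕ}
    (h : Reach n0 n N K H A) {a b : ℕ} (hab : a ≠ b) (ha : {a} ∈ K) (hb : {b} ∈ K)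
    (hn : ({a, b} : Finset ℕ) ∉ K) :
    Reach n0 (n + 1) N (insert {a, b} K) (insert {a, b} H) A := by
  obtain ⟨⟨T, rfl, rfl, hd, rfl, rfl, rfl⟩, bK, bH, bA⟩ := h
  have hcx := T.complex T.m le_rfl
  have hlt : ∀ x ∈ ({a, b} : Finset ℕ), x < N := by
    intro x hx
    rcases Finset.mem_insert.mp hx with rfl | hx
    · exact bK _ ha x (by simp)
    · rw [Finset.mem_singleton] at hx
      subst hx
      exact bK _ hb x (by simp)
  have hc2 : ({a, b} : Finset ℕ).card = 2 := Finset.card_pair hab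
  refine ⟨?_, ?_, ?_, bA⟩
  · obtain ⟨T', h1, h2, h3⟩ := T.extend (Sum.inl {a, b}) (insert {a, b} (T.K T.m))
      (insert {a, b} (T.hatK T.m)) (T.act T.m) hd
      (by
        intro σ hσ
        rcases Finset.mem_insert.mp hσ with rfl | hσ
        · exact hc2.le
        · exact hd _ le_rfl _ hσ)
      (by
        intro σ hσ
        rcases Finset.mem_insert.mp hσ with rfl | hσ
        · refine ⟨by simp, fun τ hτ hne => ?_⟩
          have : τ = {a} ∨ τ = {b} ∨ τ = {a, b} := by
            have := Finset.mem_powerset.mpr hτ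
            by_cases h1 : a ∈ τ <;> by_cases h2 : b ∈ τ
            · right; right
              apply Finset.Subset.antisymm hτ
              intro x hx
              simp at hx
              rcases hx with rfl | rfl <;> assumption
            · left
              ext x
              constructor
              · intro hx
                have := hτ hx
                simp at this ⊢
                rcases this with rfl | rfl
                · rfl
                · exact absurd hx h2
              · intro hx
                simp at hx
                subst hx; exact h1
            · right; left
              ext x
              constructor
              · intro hx
                have := hτ hx
                simp at this ⊢
                rcases this with rfl | rfl
                · exact absurd hx h1
                · rfl
              · intro hx
                simp at hx
                subst hx; exact h2
            · obtain ⟨x, hx⟩ := hne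
              have := hτ hx
              simp at this
              rcases this with rfl | rfl <;> contradiction
          rcases this with rfl | rfl | rfl
          · exact Finset.mem_insert_of_mem ha
          · exact Finset.mem_insert_of_mem hb
          · exact Finset.mem_insert_self _ _
        · exact ⟨(hcx σ hσ).1, fun τ hτ hne =>
            Finset.mem_insert_of_mem ((hcx σ hσ).2 τ hτ hne)⟩)
      (by
        intro σ hσ
        cases hσ
        exact ⟨by simp, hn, rfl, rfl, by simp [hc2]⟩)
      (by intro u v hs; cases hs)
    refine ⟨T', ?_, ?_, h3⟩
    · rw [h1, if_neg]
      · rfl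
      · rintro ⟨w, hw⟩
        have hw' := Sum.inl.inj hw
        rw [hw'] at hc2
        simp at hc2
    · rw [h2, if_pos ⟨_, rfl⟩]
  · intro σ hσ x hx
    rcases Finset.mem_insert.mp hσ with rfl | hσ
    · exact hlt x hx
    · exact bK σ hσ x hx
  · intro σ hσ x hx
    rcases Finset.mem_insert.mp hσ with rfl | hσ
    · exact hlt x hx
    · exact bH σ hσ x hx

theorem IsComplex.image_contract {K : Finset (Finset ℕ)} (h : IsComplex K) (f : ℕ → ℕ) :
    IsComplex (K.image (fun σ => σ.image f)) := by
  intro σ hσ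
  obtain ⟨ρ, hρ, rfl⟩ := Finset.mem_image.mp hσ
  refine ⟨(h ρ hρ).1.image f, fun τ hτ hne => ?_⟩
  obtain ⟨π, hπ, rfl⟩ := Finset.subset_image_iff.mp hτ
  exact Finset.mem_image.mpr
    ⟨π, (h ρ hρ).2 π (by exact_mod_cast hπ) (Finset.image_nonempty.mp hne), rfl⟩

/-- The bounds are kept by a contraction. -/
theorem Reach.contr_aux {n0 n N : ℕ} {K H : Finset (Finset ℕ)} {A : Finset ℕ}
    (h : Reach n0 n N K H A) {u v : ℕ} (hv : {v} ∈ K)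
    (hex : ∃ T : ConedTower ℕ, T.numVertexIncl = n0 ∧ T.numIncl = n ∧
      (∀ i ≤ T.m, ∀ σ ∈ T.K i, σ.card ≤ 2) ∧
      T.K T.m = K.image (fun σ => σ.image (contract u v)) ∧
      T.hatK T.m = H ∪ (actCst u H A).image (fun τ => insert v τ) ∧
      T.act T.m = A.erase u) :
    Reach n0 n N (K.image (fun σ => σ.image (contract u v)))
      (H ∪ (actCst u H A).image (fun τ => insert v τ)) (A.erase u) := by
  have hvN : v < N := h.bK _ hv v (by simp)
  refine ⟨hex, ?_, ?_, ?_⟩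
  · intro σ hσ x hx
    obtain ⟨ρ, hρ, rfl⟩ := Finset.mem_image.mp hσ
    obtain ⟨y, hy, rfl⟩ := Finset.mem_image.mp hx
    unfold contract
    split_ifs
    · exact hvN
    · exact h.bK ρ hρ y hy
  · intro σ hσ x hx
    rcases Finset.mem_union.mp hσ with hσ | hσ
    · exact h.bH σ hσ x hx
    · obtain ⟨ρ, hρ, rfl⟩ := Finset.mem_image.mp hσ
      simp only [actCst, closedStar, Finset.mem_filter] at hρ
      rcases Finset.mem_insert.mp hx with rfl | hx
      · exact hvN
      · exact h.bH ρ hρ.1.1 x hx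
  · intro x hx
    exact h.bA x (Finset.mem_of_mem_erase hx)

/-- Contraction of two vertices: one of the two outcomes is reached. -/
theorem Reach.contr {n0 n N : ℕ} {K H : Finset (Finset ℕ)} {A : Finset ℕ}
    (h : Reach n0 n N K H A) {u v : ℕ} (huv : u ≠ v) (hu : {u} ∈ K) (hv : {v} ∈ K) :
    Reach n0 n N (K.image (fun σ => σ.image (contract u v)))
      (H ∪ (actCst u H A).image (fun τ => insert v τ)) (A.erase u) ∨
    Reach n0 n N (K.image (fun σ => σ.image (contract v u)))
      (H ∪ (actCst v H A).image (fun τ => insert u τ)) (A.erase v) := by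
  have h' := h
  obtain ⟨⟨T, rfl, rfl, hd, rfl, rfl, rfl⟩, bK, bH, bA⟩ := h
  have hcx := T.complex T.m le_rfl
  have hd' : ∀ f : ℕ → ℕ, ∀ σ ∈ (T.K T.m).image (fun σ => σ.image f), σ.card ≤ 2 := by
    intro f σ hσ
    obtain ⟨ρ, hρ, rfl⟩ := Finset.mem_image.mp hσ
    exact Finset.card_image_le.trans (hd _ le_rfl ρ hρ)
  by_cases hle : (actCst u (T.hatK T.m) (T.act T.m)).card ≤
      (actCst v (T.hatK T.m) (T.act T.m)).card
  · left
    apply h'.contr_aux hv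
    obtain ⟨T', h1, h2, h3⟩ := T.extend (Sum.inr (u, v)) _ _ _ hd
      (hd' (contract u v)) (hcx.image_contract (contract u v))
      (by intro σ hs; cases hs)
      (by
        intro u' v' hs
        cases hs
        refine ⟨huv, hu, hv, ?_⟩
        rw [if_pos hle]
        exact ⟨rfl, rfl, rfl⟩)
    refine ⟨T', ?_, ?_, h3⟩
    · rw [h1, if_neg (by simp)]; rfl
    · rw [h2, if_neg (by simp)]; rfl
  · right
    apply h'.contr_aux hu
    obtain ⟨T', h1, h2, h3⟩ := T.extend (Sum.inr (u, v)) _ _ _ hd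
      (hd' (contract v u)) (hcx.image_contract (contract v u))
      (by intro σ hs; cases hs)
      (by
        intro u' v' hs
        cases hs
        refine ⟨huv, hu, hv, ?_⟩
        rw [if_neg hle]
        exact ⟨rfl, rfl, rfl⟩)
    refine ⟨T', ?_, ?_, h3⟩
    · rw [h1, if_neg (by simp)]; rfl
    · rw [h2, if_neg (by simp)]; rfl

/-- In the complex `H` with active vertices `A`, `r` is an active vertex joined to all
the active vertices in `L`. -/
structure StarAt (H : Finset (Finset ℕ)) (A : Finset ℕ) (r : ℕ) (L : Finset ℕ) : Prop where
  r_act : r ∈ A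
  L_act : L ⊆ A
  r_not : r ∉ L
  leaf : ∀ b ∈ L, {b} ∈ H
  edge : ∀ b ∈ L, ({r, b} : Finset ℕ) ∈ H

theorem StarAt.mono {H H' : Finset (Finset ℕ)} {A A' : Finset ℕ} {r : ℕ} {L : Finset ℕ}
    (h : StarAt H A r L) (hH : H ⊆ H') (hA : A ⊆ A') : StarAt H' A' r L :=
  ⟨hA h.r_act, h.L_act.trans hA, h.r_not, fun b hb => hH (h.leaf b hb),
    fun b hb => hH (h.edge b hb)⟩

/-- The effect of a contraction of the roots of two separated stars. -/
theorem StarAt.merge {H : Finset (Finset ℕ)} {A : Finset ℕ} {u v : ℕ} {L M : Finset ℕ}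
    (hu : StarAt H A u L) (hv : StarAt H A v M) (huv : u ≠ v) (hLM : Disjoint L M)
    (huM : u ∉ M) (hvL : v ∉ L) (hsep : ∀ b ∈ L, ({v, b} : Finset ℕ) ∉ H) :
    StarAt (H ∪ (actCst u H A).image (fun τ => insert v τ)) (A.erase u) v (L ∪ M) ∧
    H.card + L.card ≤ (H ∪ (actCst u H A).image (fun τ => insert v τ)).card := by
  have key : ∀ b ∈ L, ({v, b} : Finset ℕ) ∈ (actCst u H A).image (fun τ => insert v τ) := by
    intro b hb
    refine Finset.mem_image.mpr ⟨{b}, ?_, rfl⟩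
    simp only [actCst, closedStar, Finset.mem_filter]
    exact ⟨⟨hu.leaf b hb, hu.edge b hb⟩, by simpa using hu.L_act hb⟩
  constructor
  · refine ⟨?_, ?_, ?_, ?_, ?_⟩
    · exact Finset.mem_erase.mpr ⟨huv.symm, hv.r_act⟩
    · intro x hx
      rcases Finset.mem_union.mp hx with hx | hx
      · exact Finset.mem_erase.mpr ⟨fun h => hu.r_not (h ▸ hx), hu.L_act hx⟩
      · exact Finset.mem_erase.mpr ⟨fun h => huM (h ▸ hx), hv.L_act hx⟩
    · simp [hvL, hv.r_not]
    · intro b hb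
      rcases Finset.mem_union.mp hb with hb | hb
      · exact Finset.mem_union_left _ (hu.leaf b hb)
      · exact Finset.mem_union_left _ (hv.leaf b hb)
    · intro b hb
      rcases Finset.mem_union.mp hb with hb | hb
      · exact Finset.mem_union_right _ (key b hb)
      · exact Finset.mem_union_left _ (hv.edge b hb)
  · have hinj : (L.image (fun b => ({v, b} : Finset ℕ))).card = L.card := by
      apply Finset.card_image_of_injOn
      intro b hb c hc hbc
      have h1 : b ∈ ({v, c} : Finset ℕ) := by
        have : b ∈ ({v, b} : Finset ℕ) := by simp
        simpa only [hbc] using (show b ∈ (fun b => ({v, b} : Finset ℕ)) b from this)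
      rcases Finset.mem_insert.mp h1 with h | h
      · exact absurd (h ▸ hb) hvL
      · simpa using h
    have hdis : Disjoint H (L.image (fun b => ({v, b} : Finset ℕ))) := by
      rw [Finset.disjoint_right]
      intro σ hσ
      obtain ⟨b, hb, rfl⟩ := Finset.mem_image.mp hσ
      exact hsep b hb
    rw [← hinj, ← Finset.card_union_of_disjoint hdis]
    apply Finset.card_le_card
    apply Finset.union_subset_union_right
    intro σ hσ
    obtain ⟨b, hb, rfl⟩ := Finset.mem_image.mp hσ
    exact key b hb

/-- One merge step, with all bookkeeping relative to an earlier stage `K, H, A`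
whose vertices lie below `N`. -/
theorem merge_step {N N' : ℕ} {K H K' H' : Finset (Finset ℕ)} {A A' : Finset ℕ}
    (bK : ∀ σ ∈ K, ∀ x ∈ σ, x < N) (bH : ∀ σ ∈ H, ∀ x ∈ σ, x < N) (bA : ∀ x ∈ A, x < N)
    (hK : K ⊆ K') (hH : H ⊆ H') (hA : A ⊆ A')
    (hnew : ∀ σ ∈ H', σ ∈ H ∨ ∀ x ∈ σ, N ≤ x ∧ x < N')
    {u v : ℕ} (huv : u ≠ v) (hu : N ≤ u ∧ u < N') (hv : N ≤ v ∧ v < N')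
    (hvK : {v} ∈ K') :
    K ⊆ K'.image (fun σ => σ.image (contract u v)) ∧
    H ⊆ H' ∪ (actCst u H' A').image (fun τ => insert v τ) ∧
    A ⊆ A'.erase u ∧
    (∀ σ ∈ H' ∪ (actCst u H' A').image (fun τ => insert v τ),
      σ ∈ H ∨ ∀ x ∈ σ, N ≤ x ∧ x < N') ∧
    {v} ∈ K'.image (fun σ => σ.image (contract u v)) := by
  refine ⟨?_, ?_, ?_, ?_, ?_⟩
  · intro σ hσ
    refine Finset.mem_image.mpr ⟨σ, hK hσ, ?_⟩
    have : σ.image (contract u v) = σ.image id := by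
      apply Finset.image_congr
      intro x hx
      have := bK σ hσ x hx
      have hne : x ≠ u := by omega
      simp [contract, hne]
    rw [this, Finset.image_id]
  · exact hH.trans Finset.subset_union_left
  · intro x hx
    have := bA x hx
    exact Finset.mem_erase.mpr ⟨by omega, hA hx⟩
  · intro σ hσ
    rcases Finset.mem_union.mp hσ with hσ | hσ
    · exact hnew σ hσ
    · right
      obtain ⟨ρ, hρ, rfl⟩ := Finset.mem_image.mp hσ
      simp only [actCst, closedStar, Finset.mem_filter] at hρ
      rcases hnew _ hρ.1.2 with h | h
      · have := bH _ h u (by simp)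
        omega
      · intro x hx
        rcases Finset.mem_insert.mp hx with rfl | hx
        · exact hv
        · exact h x (Finset.mem_insert_of_mem hx)
  · refine Finset.mem_image.mpr ⟨{v}, hvK, ?_⟩
    simp [contract, huv.symm]

/-- The balanced construction, built on top of an arbitrary reachable state. -/
theorem balanced (j : ℕ) : ∀ (n0 n N : ℕ) (K H : Finset (Finset ℕ)) (A : Finset ℕ),
    Reach n0 n N K H A →
    ∃ (N' : ℕ) (K' H' : Finset (Finset ℕ)) (A' : Finset ℕ) (r : ℕ) (L : Finset ℕ),
      Reach (n0 + 2 * 2 ^ j) (n + 3 * 2 ^ j) N' K' H' A' ∧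
      K ⊆ K' ∧ H ⊆ H' ∧ A ⊆ A' ∧
      (∀ σ ∈ H', σ ∈ H ∨ ∀ x ∈ σ, N ≤ x ∧ x < N') ∧
      {r} ∈ K' ∧ (N ≤ r ∧ r < N') ∧ (∀ x ∈ L, N ≤ x ∧ x < N') ∧
      StarAt H' A' r L ∧ L.card = 2 ^ j ∧
      2 * H.card + 6 * 2 ^ j + j * 2 ^ j ≤ 2 * H'.card := by
  induction j with
  | zero =>
    intro n0 n N K H A h
    have h2 := h.vertex.vertex
    have hne : ({N, N + 1} : Finset ℕ).card = 2 := Finset.card_pair (by omega)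
    have h3 := h2.edge (a := N) (b := N + 1) (by omega) (by simp) (by simp) (by
      intro hm
      simp only [Finset.mem_insert] at hm
      rcases hm with hm | hm | hm
      · rw [hm] at hne; simp at hne
      · rw [hm] at hne; simp at hne
      · have := h.bK _ hm N (by simp)
        omega)
    refine ⟨_, _, _, _, N, {N + 1}, h3, ?_, ?_, ?_, ?_, ?_, ?_, ?_, ?_, ?_, ?_⟩
    · intro σ hσ; simp [hσ]
    · intro σ hσ; simp [hσ]
    · intro σ hσ; simp [hσ]
    · intro σ hσ
      simp only [Finset.mem_insert] at hσ
      rcases hσ with rfl | rfl | rfl | hσ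
      · right
        intro x hx
        simp at hx
        omega
      · right
        intro x hx
        simp at hx
        omega
      · right
        intro x hx
        simp at hx
        omega
      · exact Or.inl hσ
    · simp
    · omega
    · intro x hx
      simp at hx
      omega
    · refine ⟨by simp, by simp, by simp, by simp, by simp⟩
    · simp
    · have e1 : ({N} : Finset ℕ) ∉ H := fun hm => by
        have := h.bH _ hm N (by simp)
        omega
      have e2 : ({N + 1} : Finset ℕ) ∉ insert {N} H := fun hm => by
        rcases Finset.mem_insert.mp hm with hm | hm
        · simp at hm
        · have := h.bH _ hm (N + 1) (by simp)
          omega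
      have e3 : ({N, N + 1} : Finset ℕ) ∉ insert {N + 1} (insert {N} H) := fun hm => by
        simp only [Finset.mem_insert] at hm
        rcases hm with hm | hm | hm
        · rw [hm] at hne; simp at hne
        · rw [hm] at hne; simp at hne
        · have := h.bH _ hm N (by simp)
          omega
      rw [Finset.card_insert_of_notMem e3, Finset.card_insert_of_notMem e2,
        Finset.card_insert_of_notMem e1]
      omega
  | succ j ih =>
    intro n0 n N K H A h
    obtain ⟨N1, K1, H1, A1, u, L, h1, hK1, hH1, hA1, new1, uK, uN, LN, su, cL, size1⟩ :=
      ih n0 n N K H A h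
    obtain ⟨N2, K2, H2, A2, v, M, h2, hK2, hH2, hA2, new2, vK, vN, MN, sv, cM, size2⟩ :=
      ih _ _ N1 K1 H1 A1 h1
    have huv : u ≠ v := by omega
    have su2 := su.mono hH2 hA2
    have hLM : Disjoint L M := by
      rw [Finset.disjoint_left]
      intro x hx hx'
      have := LN x hx
      have := MN x hx'
      omega
    have huM : u ∉ M := fun hm => by
      have := MN u hm
      omega
    have hvL : v ∉ L := fun hm => by
      have := LN v hm
      omega
    have mixed : ∀ σ ∈ H2, ∀ x ∈ σ, ∀ y ∈ σ, x < N1 → N1 ≤ y → False := by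
      intro σ hσ x hx y hy hx1 hy1
      rcases new2 σ hσ with hs | hs
      · have := h1.bH σ hs y hy
        omega
      · have := hs x hx
        omega
    have new : ∀ σ ∈ H2, σ ∈ H ∨ ∀ x ∈ σ, N ≤ x ∧ x < N2 := by
      intro σ hσ
      rcases new2 σ hσ with hs | hs
      · rcases new1 σ hs with ht | ht
        · exact Or.inl ht
        · right
          intro x hx
          have := ht x hx
          omega
      · right
        intro x hx
        have := hs x hx
        omega
    have p1 : 2 ^ (j + 1) = 2 * 2 ^ j := by ring
    have p2 : (j + 1) * 2 ^ (j + 1) = 2 * (j * 2 ^ j) + 2 * 2 ^ j := by ring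
    have q1 : n0 + 2 * 2 ^ j + 2 * 2 ^ j = n0 + 2 * 2 ^ (j + 1) := by omega
    have q2 : n + 3 * 2 ^ j + 3 * 2 ^ j = n + 3 * 2 ^ (j + 1) := by omega
    rw [q1, q2] at h2
    have hLMb : ∀ x ∈ L ∪ M, N ≤ x ∧ x < N2 := by
      intro x hx
      rcases Finset.mem_union.mp hx with hx | hx
      · have := LN x hx
        omega
      · have := MN x hx
        omega
    have hcard : (L ∪ M).card = 2 ^ (j + 1) := by
      rw [Finset.card_union_of_disjoint hLM]
      omega
    rcases h2.contr huv (hK2 uK) vK with hr | hr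
    · obtain ⟨a1, a2, a3, a4, a5⟩ := merge_step h.bK h.bH h.bA (hK1.trans hK2)
        (hH1.trans hH2) (hA1.trans hA2) new huv (by omega) (by omega) vK
      obtain ⟨s1, s2⟩ := su2.merge sv huv hLM huM hvL (fun b hb hm =>
        mixed _ hm b (by simp) v (by simp) (LN b hb).2 vN.1)
      refine ⟨N2, _, _, _, v, L ∪ M, hr, a1, a2, a3, a4, a5, by omega, hLMb, s1, hcard, ?_⟩
      omega
    · obtain ⟨a1, a2, a3, a4, a5⟩ := merge_step h.bK h.bH h.bA (hK1.trans hK2)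
        (hH1.trans hH2) (hA1.trans hA2) new huv.symm (by omega) (by omega) (hK2 uK)
      obtain ⟨s1, s2⟩ := sv.merge su2 huv.symm hLM.symm hvL huM (fun b hb hm =>
        mixed _ hm u (by simp) b (by simp) uN.2 (MN b hb).1)
      rw [Finset.union_comm] at hLMb hcard
      refine ⟨N2, _, _, _, u, M ∪ L, hr, a1, a2, a3, a4, a5, by omega, hLMb, s1, hcard, ?_⟩
      omega

/-- For every integer `k ≥ 1` there exists a tower (of dimension at
most 1, i.e. all simplices have at most 2 vertices) with `n₀ = 2^(k+1)` elementary
inclusions of vertices and `n = 3·2^k` elementary inclusions in total, whose coning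
filtration satisfies `|K̂_m| ≥ n + k·2^(k−1)`.  In particular, the coning
construction can produce a filtration of size `Ω(n·log n₀)`. -/
theorem exists_tower_large_coning (k : ℕ) (hk : 1 ≤ k) :
    ∃ T : ConedTower ℕ,
      T.numVertexIncl = 2 ^ (k + 1) ∧
      T.numIncl = 3 * 2 ^ k ∧
      (∀ i ≤ T.m, ∀ σ ∈ T.K i, σ.card ≤ 2) ∧
      3 * 2 ^ k + k * 2 ^ (k - 1) ≤ (T.hatK T.m).card := by
  obtain ⟨N', K', H', A', r, L, hR, -, -, -, -, -, -, -, -, -, hsize⟩ :=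
    balanced k 0 0 0 ∅ ∅ ∅ reach_empty
  obtain ⟨T, h1, h2, h3, h4, h5, h6⟩ := hR.ex
  refine ⟨T, ?_, ?_, h3, ?_⟩
  · rw [h1]
    ring
  · rw [h2]
    ring
  · rw [h5]
    obtain ⟨l, rfl⟩ : ∃ l, k = l + 1 := ⟨k - 1, by omega⟩
    have e : (l + 1) * 2 ^ (l + 1) = 2 * ((l + 1) * 2 ^ l) := by ring
    simp only [Finset.card_empty, Nat.add_sub_cancel] at hsize ⊢
    omega
end
end
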